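/- Let (X,f) be a sensitive compact dynamical system which has a fixed point p (f(p) = p) such that {p} is the unique minimal subset of (X,f). Then (X,f) is Li–Yorke sensitive. -/

import Mathlib

/-!
Every pair of points is proximal. By Zorn's lemma and compactness every nonempty closed invariant
set contains a minimal set, hence contains `p`. Applied to the fibre structure of a closed
`f × f`-invariant set `K ⊆ X × X`, this gives `(p, p) ∈ K`: first `p` lies in the first projection
of `K`, then `p` lies in the second projection of the closed invariant set `K ∩ ({p} × X)`. Taking
for `K` the closure of the orbit of a pair shows that the two orbits are simultaneously close to
`p`, and therefore to each other, infinitely often.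

It remains to find many `y` that are not asymptotic to a given `x`. Let `ε` be a sensitivity
constant. The closed sets `A N = {y | ∀ n ≥ N, d(fⁿ x, fⁿ y) ≤ ε / 2}` have empty interior: on an
open subset of `A N` the iterates from time `N` on separate points by at most `ε`, and so do the
finitely many earlier iterates after shrinking the open set. By the Baire category theorem
`⋃ N, A N` has dense complement, and any `y` in this complement satisfies
`limsup d(fⁿ x, fⁿ y) ≥ ε / 2 > ε / 4`.
-/

open Filter Set Metric Topology

section Defs

variable {X : Type*} [MetricSpace X]

/-- The orbit of a point under a map. -/
def orbitOf (f : X → X) (x : X) : Set X := Set.range fun n : ℕ => f^[n] x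

/-- The ω-limit set of `x`: the set of limit points of the orbit. -/
def omegaLimitSet (f : X → X) (x : X) : Set X :=
  ⋂ N : ℕ, closure ((fun n : ℕ => f^[n] x) '' Set.Ici N)

/-- Topological transitivity. -/
def TopTransitive (f : X → X) : Prop :=
  ∀ U V : Set X, IsOpen U → IsOpen V → U.Nonempty → V.Nonempty →
    ∃ n : ℕ, (f^[n] '' U ∩ V).Nonempty

/-- A minimal subset: nonempty, closed, invariant, with no proper nonempty closed
invariant subset. -/
def MinimalSubset (f : X → X) (M : Set X) : Prop :=
  M.Nonempty ∧ IsClosed M ∧ f '' M ⊆ M ∧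
    ∀ N : Set X, N ⊆ M → N.Nonempty → IsClosed N → f '' N ⊆ N → N = M

/-- A point is almost periodic if its orbit closure is a minimal set. -/
def AlmostPeriodicPt (f : X → X) (x : X) : Prop :=
  MinimalSubset f (closure (orbitOf f x))

/-- A minimal system: every orbit closure is the whole space. -/
def MinimalSystem (f : X → X) : Prop := ∀ x : X, closure (orbitOf f x) = Set.univ

/-- A point `x` is `ε`-sensitive. -/
def SensitivePt (f : X → X) (ε : ℝ) (x : X) : Prop :=
  ∀ δ > (0:ℝ), ∃ y : X, dist x y < δ ∧ ∃ n : ℕ, dist (f^[n] x) (f^[n] y) > ε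

/-- Sensitive dependence on initial conditions. -/
def Sensitive (f : X → X) : Prop :=
  ∃ δ > (0:ℝ), ∀ U : Set X, IsOpen U → U.Nonempty →
    ∃ y ∈ U, ∃ z ∈ U, ∃ n : ℕ, dist (f^[n] y) (f^[n] z) > δ

/-- An equicontinuous system. -/
def EquicontinuousSystem (f : X → X) : Prop :=
  ∀ ε > (0:ℝ), ∃ δ > (0:ℝ), ∀ x y : X, dist x y < δ → ∀ n : ℕ, dist (f^[n] x) (f^[n] y) < ε

/-- The separating times `N_δ(U) = {n : diam (fⁿ U) > δ}`. -/
def SepTimes (f : X → X) (δ : ℝ) (U : Set X) : Set ℕ :=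
  {n : ℕ | Metric.diam (f^[n] '' U) > δ}

/-- A thick subset of ℕ. -/
def Thick (S : Set ℕ) : Prop := ∀ k : ℕ, ∃ n : ℕ, ∀ i ≤ k, n + i ∈ S

/-- A syndetic subset of ℕ. -/
def Syndetic (S : Set ℕ) : Prop := ∃ M : ℕ, ∀ n : ℕ, ∃ i ≤ M, n + i ∈ S

/-- A piecewise syndetic subset of ℕ: an intersection of a syndetic set with a thick set. -/
def PiecewiseSyndetic (S : Set ℕ) : Prop :=
  ∃ A B : Set ℕ, Syndetic A ∧ Thick B ∧ S = A ∩ B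

/-- A thickly syndetic subset of ℕ: meets every piecewise syndetic set. -/
def ThicklySyndetic (S : Set ℕ) : Prop :=
  ∀ T : Set ℕ, PiecewiseSyndetic T → (S ∩ T).Nonempty

/-- An IP subset of ℕ: contains all finite sums of distinct terms of some infinite sequence. -/
def IPSet (S : Set ℕ) : Prop :=
  ∃ seq : ℕ → ℕ, ∀ F : Finset ℕ, F.Nonempty → (∑ i ∈ F, seq i) ∈ S

/-- Strong (cofinite) sensitivity. -/
def StronglySensitive (f : X → X) : Prop :=
  ∃ δ > (0:ℝ), ∀ U : Set X, IsOpen U → U.Nonempty → (SepTimes f δ U)ᶜ.Finite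

/-- Thick sensitivity. -/
def ThicklySensitive (f : X → X) : Prop :=
  ∃ δ > (0:ℝ), ∀ U : Set X, IsOpen U → U.Nonempty → Thick (SepTimes f δ U)

/-- Syndetic sensitivity. -/
def SyndeticallySensitive (f : X → X) : Prop :=
  ∃ δ > (0:ℝ), ∀ U : Set X, IsOpen U → U.Nonempty → Syndetic (SepTimes f δ U)

/-- Thickly syndetic sensitivity. -/
def ThicklySyndeticallySensitive (f : X → X) : Prop :=
  ∃ δ > (0:ℝ), ∀ U : Set X, IsOpen U → U.Nonempty → ThicklySyndetic (SepTimes f δ U)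

/-- IP sensitivity. -/
def IPSensitive (f : X → X) : Prop :=
  ∃ δ > (0:ℝ), ∀ U : Set X, IsOpen U → U.Nonempty → IPSet (SepTimes f δ U)

/-- Multi-sensitivity. -/
def MultiSensitive (f : X → X) : Prop :=
  ∃ δ > (0:ℝ), ∀ k : ℕ, ∀ U : Fin (k + 1) → Set X,
    (∀ i, IsOpen (U i)) → (∀ i, (U i).Nonempty) →
    (⋂ i, SepTimes f δ (U i)).Nonempty

/-- A proximal pair. -/
def ProximalPair (f : X → X) (x y : X) : Prop :=
  Filter.atTop.liminf (fun n : ℕ => dist (f^[n] x) (f^[n] y)) = 0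

/-- Li–Yorke sensitivity. -/
def LiYorkeSensitive (f : X → X) : Prop :=
  ∃ δ > (0:ℝ), ∀ x : X, x ∈ closure {y : X | ProximalPair f x y ∧
    Filter.atTop.limsup (fun n : ℕ => dist (f^[n] x) (f^[n] y)) > δ}

/-- Uniform rigidity. -/
def UniformlyRigid (f : X → X) : Prop :=
  ∃ n : ℕ → ℕ, StrictMono n ∧
    TendstoUniformly (fun k x => f^[n k] x) id Filter.atTop

/-- An equicontinuity point. -/
def EquicontinuityPt (f : X → X) (x : X) : Prop :=
  ∀ ε > (0:ℝ), ∃ δ > (0:ℝ), ∀ y : X, dist x y < δ → ∀ n : ℕ, dist (f^[n] x) (f^[n] y) < ε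

/-- A syndetically equicontinuous point. -/
def SyndeticallyEquicontinuousPt (f : X → X) (x : X) : Prop :=
  ∀ ε > (0:ℝ), ∃ δ > (0:ℝ),
    Syndetic {n : ℕ | ∀ y : X, dist x y < δ → dist (f^[n] x) (f^[n] y) < ε}

/-- `𝓕`-sensitivity for a family `𝓕` of subsets of ℕ. -/
def FSensitive (f : X → X) (𝓕 : Set (Set ℕ)) : Prop :=
  ∃ δ > (0:ℝ), ∀ U : Set X, IsOpen U → U.Nonempty → SepTimes f δ U ∈ 𝓕

end Defs

/-- In a compact space every nonempty closed invariant set contains a minimal set. -/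
lemma exists_minimalSubset {X : Type*} [MetricSpace X] [CompactSpace X] (f : X → X)
    (C : Set X) (hne : C.Nonempty) (hcl : IsClosed C) (hinv : f '' C ⊆ C) :
    ∃ M ⊆ C, MinimalSubset f M := by
  obtain ⟨M, hMC, hM⟩ := zorn_superset_nonempty
    {N : Set X | N.Nonempty ∧ IsClosed N ∧ f '' N ⊆ N} (by
      intro c hc hchain hcne
      refine ⟨⋂₀ c, ⟨?_, ?_, ?_⟩, fun s hs => sInter_subset_of_mem hs⟩
      · have : Nonempty c := hcne.to_subtype
        exact IsCompact.nonempty_sInter_of_directed_nonempty_isCompact_isClosed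
          (IsChain.directedOn hchain.symm) (fun s hs => (hc hs).1)
          (fun s hs => (hc hs).2.1.isCompact) (fun s hs => (hc hs).2.1)
      · exact isClosed_sInter fun s hs => (hc hs).2.1
      · rintro _ ⟨x, hx, rfl⟩ s hs
        exact (hc hs).2.2 ⟨x, hx s hs, rfl⟩) C ⟨hne, hcl, hinv⟩
  refine ⟨M, hMC, hM.prop.1, hM.prop.2.1, hM.prop.2.2, fun N hNM h1 h2 h3 => ?_⟩
  exact hNM.antisymm (hM.le_of_le ⟨h1, h2, h3⟩ hNM)

/-- If every nonempty closed `f`-invariant set contains `p`, then every nonempty closed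
`f × f`-invariant set contains `(p, p)`. -/
lemma prod_fixed_mem {X : Type*} [MetricSpace X] [CompactSpace X] (f : X → X)
    (p : X) (hp : f p = p)
    (hC : ∀ C : Set X, C.Nonempty → IsClosed C → f '' C ⊆ C → p ∈ C)
    (K : Set (X × X)) (hne : K.Nonempty) (hcl : IsClosed K)
    (hinv : ∀ z ∈ K, (f z.1, f z.2) ∈ K) : (p, p) ∈ K := by
  have h1 : p ∈ Prod.fst '' K := by
    refine hC _ (hne.image _) (hcl.isCompact.image continuous_fst).isClosed ?_
    rintro _ ⟨_, ⟨z, hz, rfl⟩, rfl⟩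
    exact ⟨_, hinv z hz, rfl⟩
  obtain ⟨⟨a, b⟩, hz, hza⟩ := h1
  obtain rfl : a = p := hza
  refine hC {y | (a, y) ∈ K} ⟨b, hz⟩ (hcl.preimage (Continuous.prodMk_right a)) ?_
  rintro _ ⟨y, hy, rfl⟩
  have := hinv _ hy
  rwa [hp] at this

/-- Under the same hypothesis every pair of orbits comes arbitrarily close. -/
lemma exists_dist_iterate_lt {X : Type*} [MetricSpace X] [CompactSpace X] (f : X → X)
    (hf : Continuous f) (p : X) (hp : f p = p)
    (hC : ∀ C : Set X, C.Nonempty → IsClosed C → f '' C ⊆ C → p ∈ C)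
    (x y : X) (ε : ℝ) (hε : 0 < ε) : ∃ n : ℕ, dist (f^[n] x) (f^[n] y) < ε := by
  have hmem := prod_fixed_mem f p hp hC
    (closure (range fun n : ℕ => (f^[n] x, f^[n] y))) (range_nonempty _).closure
    isClosed_closure (by
      have hmaps : MapsTo (fun z : X × X => (f z.1, f z.2))
          (range fun n : ℕ => (f^[n] x, f^[n] y)) (range fun n : ℕ => (f^[n] x, f^[n] y)) := by
        rintro _ ⟨n, rfl⟩
        exact ⟨n + 1, by simp [Function.iterate_succ_apply']⟩
      exact fun z hz => hmaps.closure (by fun_prop) hz)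
  have hopen : IsOpen {z : X × X | dist z.1 z.2 < ε} :=
    isOpen_lt (by fun_prop) continuous_const
  obtain ⟨_, hz, ⟨n, rfl⟩⟩ := mem_closure_iff.1 hmem _ hopen (by simpa using hε)
  exact ⟨n, hz⟩

lemma isBoundedUnder_dist_iterate {X : Type*} [MetricSpace X] [CompactSpace X] (f : X → X)
    (x y : X) : atTop.IsBoundedUnder (· ≤ ·) (fun n : ℕ => dist (f^[n] x) (f^[n] y)) :=
  isBoundedUnder_of ⟨diam (univ : Set X), fun _ =>
    dist_le_diam_of_mem isCompact_univ.isBounded (mem_univ _) (mem_univ _)⟩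

lemma isBoundedUnder_ge_dist_iterate {X : Type*} [MetricSpace X] (f : X → X)
    (x y : X) : atTop.IsBoundedUnder (· ≥ ·) (fun n : ℕ => dist (f^[n] x) (f^[n] y)) :=
  isBoundedUnder_of ⟨0, fun _ => dist_nonneg⟩

lemma proximalPair_of_forall_exists {X : Type*} [MetricSpace X] [CompactSpace X] (f : X → X)
    (h : ∀ x y : X, ∀ ε > (0 : ℝ), ∃ n : ℕ, dist (f^[n] x) (f^[n] y) < ε) (x y : X) :
    ProximalPair f x y := by
  apply le_antisymm
  · refine le_of_forall_pos_le_add fun ε hε => ?_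
    rw [zero_add]
    refine liminf_le_of_frequently_le ?_ (isBoundedUnder_ge_dist_iterate f x y)
    rw [frequently_atTop]
    intro N
    obtain ⟨n, hn⟩ := h (f^[N] x) (f^[N] y) ε hε
    refine ⟨n + N, Nat.le_add_left _ _, ?_⟩
    rw [Function.iterate_add_apply, Function.iterate_add_apply]
    exact hn.le
  · exact le_liminf_of_le (isBoundedUnder_dist_iterate f x y).isCoboundedUnder_ge
      (Eventually.of_forall fun _ => dist_nonneg)

/-- For a sensitive map, the points that stay `ε / 2`-close to the orbit of `x` from time `N` on
form a nowhere dense closed set. -/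
lemma interior_stay_close_eq_empty {X : Type*} [MetricSpace X] (f : X → X) (hf : Continuous f)
    (ε : ℝ) (hε : 0 < ε)
    (hs : ∀ U : Set X, IsOpen U → U.Nonempty →
      ∃ y ∈ U, ∃ z ∈ U, ∃ n : ℕ, dist (f^[n] y) (f^[n] z) > ε) (x : X) (N : ℕ) :
    interior {y : X | ∀ n ≥ N, dist (f^[n] x) (f^[n] y) ≤ ε / 2} = ∅ := by
  by_contra hne
  obtain ⟨u, hu⟩ := nonempty_iff_ne_empty.2 hne
  -- Shrinking around `u` controls the finitely many iterates before time `N`.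
  set V : Set X := interior {y : X | ∀ n ≥ N, dist (f^[n] x) (f^[n] y) ≤ ε / 2} ∩
    ⋂ n ∈ Finset.range N, {y | dist (f^[n] u) (f^[n] y) < ε / 2} with hV
  have hVo : IsOpen V := by
    refine isOpen_interior.inter (isOpen_biInter_finset fun n _ => ?_)
    exact isOpen_lt (continuous_const.dist (hf.iterate n)) continuous_const
  have hVu : u ∈ V := ⟨hu, by simp [hε]⟩
  obtain ⟨y, hy, z, hz, n, hn⟩ := hs V hVo ⟨u, hVu⟩
  rcases lt_or_ge n N with h | h
  · have h1 : dist (f^[n] u) (f^[n] y) < ε / 2 := mem_iInter₂.1 hy.2 n (Finset.mem_range.2 h)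
    have h2 : dist (f^[n] u) (f^[n] z) < ε / 2 := mem_iInter₂.1 hz.2 n (Finset.mem_range.2 h)
    linarith [dist_triangle_left (f^[n] y) (f^[n] z) (f^[n] u)]
  · have h1 := interior_subset hy.1 n h
    have h2 := interior_subset hz.1 n h
    linarith [dist_triangle_left (f^[n] y) (f^[n] z) (f^[n] x)]

theorem sensitive_with_unique_minimal_fixed_point {X : Type*} [MetricSpace X]
    [CompactSpace X] (f : X → X) (hf : Continuous f) (hsurj : Function.Surjective f)
    (hsens : Sensitive f) (p : X) (hp : f p = p)
    (hmin : MinimalSubset f {p}) (huniq : ∀ M : Set X, MinimalSubset f M → M = {p}) :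
    LiYorkeSensitive f := by
  have hC : ∀ C : Set X, C.Nonempty → IsClosed C → f '' C ⊆ C → p ∈ C := by
    intro C h1 h2 h3
    obtain ⟨M, hMC, hM⟩ := exists_minimalSubset f C h1 h2 h3
    exact hMC (huniq M hM ▸ mem_singleton p)
  obtain ⟨ε, hε, hs⟩ := hsens
  refine ⟨ε / 4, by positivity, fun x => ?_⟩
  have hdense : Dense (⋂ N : ℕ, {y : X | ∀ n ≥ N, dist (f^[n] x) (f^[n] y) ≤ ε / 2}ᶜ) := by
    refine dense_iInter_of_isOpen (fun N => ?_) fun N => ?_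
    · rw [isOpen_compl_iff]
      simp only [ofPred_forall]
      exact isClosed_iInter fun n => isClosed_iInter fun _ =>
        isClosed_le (continuous_const.dist (hf.iterate n)) continuous_const
    · exact interior_eq_empty_iff_dense_compl.1 (interior_stay_close_eq_empty f hf ε hε hs x N)
  refine closure_mono ?_ (hdense x)
  intro y hy
  refine ⟨?_, ?_⟩
  · exact proximalPair_of_forall_exists f (exists_dist_iterate_lt f hf p hp hC) x y
  · have hfreq : ∃ᶠ n in atTop, ε / 2 ≤ dist (f^[n] x) (f^[n] y) := by
      rw [frequently_atTop]
      intro N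
      have hN := mem_iInter.1 hy N
      simp only [mem_compl_iff, mem_ofPred_eq, not_forall, not_le] at hN
      obtain ⟨n, hn, hlt⟩ := hN
      exact ⟨n, hn, hlt.le⟩
    have := le_limsup_of_frequently_le hfreq (isBoundedUnder_dist_iterate f x y)
    linarith
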